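/- Let G be a finite simple connected graph of order n ≥ 3. Then car(G) = n − 1 if and only if G is isomorphic to the cycle C_n. -/

import Mathlib

open SimpleGraph

/-- A set `S` is cycle convex in `G` if no vertex `w` outside `S` is such that the
subgraph induced by `S ∪ {w}` contains a cycle through `w`. -/
def IsCycleConvex {V : Type*} (G : SimpleGraph V) (S : Set V) : Prop :=
  ∀ w : V, w ∉ S →
    ¬ ∃ c : (G.induce (S ∪ {w})).Walk ⟨w, Set.mem_union_right S rfl⟩
        ⟨w, Set.mem_union_right S rfl⟩, c.IsCycle

/-- The cycle convex hull of `S`: the smallest cycle convex set containing `S`. -/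
def cycleHull {V : Type*} (G : SimpleGraph V) (S : Set V) : Set V :=
  ⋂₀ {T : Set V | S ⊆ T ∧ IsCycleConvex G T}

/-- `S` is Carathéodory independent in the cycle convexity of `G`. -/
def CIndep {V : Type*} (G : SimpleGraph V) (S : Set V) : Prop :=
  ∃ p ∈ cycleHull G S, ∀ a ∈ S, p ∉ cycleHull G (S \ {a})

/-- The Carathéodory number of `G` in the cycle convexity. -/
noncomputable def carNumber {V : Type*} (G : SimpleGraph V) : ℕ :=
  sSup {n : ℕ | ∃ S : Set V, CIndep G S ∧ S.ncard = n}

/-!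
Being in the hull of a set is controlled by the cycles of `G`: a vertex `w` enters a convex set as
soon as some cycle through `w` has all its other vertices in that set. A Carathéodory independent
set with `n - 1 ≥ 2` elements is the complement `{p}ᶜ` of a vertex, and its independence forces a
cycle through `p` to exist and every such cycle to be Hamiltonian. A chord of a Hamiltonian cycle
would cut off a shorter cycle through `p`, so `G` is that cycle. Conversely, `C_n` is connected and
`2`-regular, so all its cycles are Hamiltonian, and hence every set missing at least two vertices is
cycle convex.
-/

section

variable {V W : Type*} {G : SimpleGraph V} {H : SimpleGraph W} {S : Set V}

theorem isHamiltonianCycle_of_mem_support [DecidableEq V] {u : V} {c : G.Walk u u}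
    (hc : c.IsCycle) (hsupp : ∀ v, v ∈ c.support) : c.IsHamiltonianCycle where
  toIsCycle := hc
  isHamiltonian_tail := by
    refine hc.isPath_tail.isHamiltonian_of_mem fun v ↦ ?_
    rw [Walk.support_tail_of_not_nil c hc.not_nil]
    rcases (Walk.mem_support_iff c).1 (hsupp v) with rfl | hv
    · exact Walk.end_mem_tail_support hc.not_nil
    · exact hv

theorem isHamiltonianCycle_of_ncard_neighborSet_eq_two [DecidableEq V] (hG : G.Preconnected)
    (hreg : ∀ v, (G.neighborSet v).ncard = 2) {u : V} {c : G.Walk u u} (hc : c.IsCycle) :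
    c.IsHamiltonianCycle := by
  have : LocallyFinite G := fun v ↦
    (Set.finite_of_ncard_ne_zero (by rw [hreg v]; decide)).fintype
  refine isHamiltonianCycle_of_mem_support hc fun v ↦ ?_
  induction (reachable_iff_reflTransGen u v).1 (hG u v) with
  | refl => exact c.start_mem_support
  | tail _ hadj ih =>
    rw [← Walk.mem_verts_toSubgraph] at ih ⊢
    exact ((hc.adj_toSubgraph_iff_of_isCycles (fun v _ ↦ hreg v) ih _).2 hadj).snd_mem

theorem isCycle_cons_and_length_lt_of_chord {u v : V} {P : G.Walk u v} {Q : G.Walk v u}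
    (hc : (P.append Q).IsCycle) (huv : G.Adj v u) (hchord : s(v, u) ∉ (P.append Q).edges) :
    (Walk.cons huv P).IsCycle ∧ (Walk.cons huv P).length < (P.append Q).length := by
  rw [Walk.edges_append, List.mem_append, not_or] at hchord
  have hQ : 2 ≤ Q.length := by
    match Q with
    | .nil => exact absurd huv G.irrefl
    | .cons _ .nil => simp at hchord
    | .cons _ (.cons _ _) => simp
  have hQnil : ¬Q.Nil := by
    rw [← Walk.length_eq_zero_iff]
    lia
  refine ⟨(Walk.cons_isCycle_iff _ _).2 ⟨hc.isPath_of_append_left hQnil, hchord.1⟩, ?_⟩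
  rw [Walk.length_cons, Walk.length_append]
  lia

theorem exists_isCycle_length_lt_of_chord {p u v : V} {c : G.Walk p p} (hc : c.IsCycle)
    (hu : u ∈ c.support) (hv : v ∈ c.support) (huv : G.Adj u v) (hchord : s(u, v) ∉ c.edges) :
    ∃ d : G.Walk p p, d.IsCycle ∧ d.length < c.length := by
  classical
  obtain ⟨P, Q, hPQ⟩ := Walk.mem_support_iff_exists_append.1 ((c.mem_support_rotate_iff u hu).2 hv)
  have hcycle : (P.append Q).IsCycle := hPQ ▸ hc.rotate hu
  have hlength : (P.append Q).length = c.length := by rw [← hPQ, Walk.length_rotate]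
  have hedges : s(u, v) ∉ (P.append Q).edges := by
    rwa [← hPQ, (c.rotate_edges u hu).mem_iff]
  have hp : p ∈ (P.append Q).support := hPQ ▸ (c.mem_support_rotate_iff u hu).2 c.start_mem_support
  -- The arcs `P` and `Q` are both closed up by the chord; one of the two contains `p`.
  obtain ⟨x, d, hd, hpd, hlt⟩ :
      ∃ (x : V) (d : G.Walk x x), d.IsCycle ∧ p ∈ d.support ∧ d.length < c.length := by
    rcases (Walk.mem_support_append_iff ..).1 hp with hpP | hpQ
    · obtain ⟨hd, hlt⟩ := isCycle_cons_and_length_lt_of_chord hcycle huv.symm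
        (Sym2.eq_swap ▸ hedges)
      exact ⟨v, _, hd, List.mem_cons_of_mem v hpP, hlength ▸ hlt⟩
    · rw [← Walk.isCycle_reverse, Walk.reverse_append] at hcycle
      rw [← Walk.length_reverse, Walk.reverse_append] at hlength
      rw [← List.mem_reverse, ← Walk.edges_reverse, Walk.reverse_append, Sym2.eq_swap] at hedges
      obtain ⟨hd, hlt⟩ := isCycle_cons_and_length_lt_of_chord hcycle huv.symm hedges
      exact ⟨v, _, hd, List.mem_cons_of_mem v (by simpa using hpQ), hlength ▸ hlt⟩
  exact ⟨d.rotate p hpd, hd.rotate hpd, by rwa [Walk.length_rotate]⟩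

theorem copy_adj_iff {f : Copy H G} {v w : W} (hfin : (G.neighborSet (f v)).Finite)
    (hle : (G.neighborSet (f v)).ncard ≤ (H.neighborSet v).ncard) :
    G.Adj (f v) (f w) ↔ H.Adj v w := by
  have himage : f '' H.neighborSet v = G.neighborSet (f v) := by
    refine Set.eq_of_subset_of_ncard_le ?_ ?_ hfin
    · rintro _ ⟨x, hx, rfl⟩
      exact f.toHom.map_adj hx
    · exact hle.trans_eq (Set.ncard_image_of_injective _ f.injective).symm
  rw [← mem_neighborSet, ← himage]
  exact f.injective.mem_set_image

theorem ncard_neighborSet_cycleGraph {n : ℕ} (hn : 3 ≤ n) (v : Fin n) :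
    ((cycleGraph n).neighborSet v).ncard = 2 := by
  obtain ⟨m, rfl⟩ := Nat.exists_eq_add_of_le' hn
  rw [Set.ncard_eq_toFinset_card', ← neighborFinset, card_neighborFinset_eq_degree,
    cycleGraph_degree_three_le]

theorem ncard_neighborSet_eq_two_of_forall_isHamiltonianCycle [DecidableEq V] {p : V}
    {c : G.Walk p p} (hc : c.IsCycle) (hall : ∀ d : G.Walk p p, d.IsCycle → d.IsHamiltonianCycle)
    (v : V) : (G.neighborSet v).ncard = 2 := by
  have := (hall c hc).finite
  have := Fintype.ofFinite V
  have hsupp := (hall c hc).mem_support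
  have hnbr : G.neighborSet v = c.toSubgraph.neighborSet v := by
    refine Set.Subset.antisymm (fun w hvw ↦ ?_) (c.toSubgraph.neighborSet_subset v)
    by_contra hchord
    obtain ⟨d, hd, hlt⟩ := exists_isCycle_length_lt_of_chord hc (hsupp v) (hsupp w) hvw
      (mt Walk.adj_toSubgraph_iff_mem_edges.2 hchord)
    rw [(hall d hd).length_eq, (hall c hc).length_eq] at hlt
    exact hlt.false
  rw [hnbr, hc.ncard_neighborSet_toSubgraph_eq_two (hsupp v)]

theorem nonempty_iso_cycleGraph_of_isHamiltonianCycle [Fintype V] [DecidableEq V] {p : V}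
    {c : G.Walk p p} (hc : c.IsHamiltonianCycle) (hreg : ∀ v, (G.neighborSet v).ncard = 2) :
    Nonempty (G ≃g cycleGraph (Fintype.card V)) := by
  have hn : 3 ≤ Fintype.card V := hc.length_eq ▸ hc.isCycle.three_le_length
  obtain ⟨f⟩ := (cycleGraph_isContained_iff hn).2 ⟨p, c, hc.isCycle, hc.length_eq⟩
  have hf : Function.Bijective f :=
    (Fintype.bijective_iff_injective_and_card f).2 ⟨f.injective, Fintype.card_fin _⟩
  refine ⟨RelIso.symm ⟨Equiv.ofBijective f hf, fun {v w} ↦ copy_adj_iff (Set.toFinite _) ?_⟩⟩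
  rw [hreg, ncard_neighborSet_cycleGraph hn]

theorem isHamiltonianCycle_of_iso_cycleGraph [DecidableEq V] {n : ℕ} (hn : 3 ≤ n)
    (e : G ≃g cycleGraph n) {u : V} {c : G.Walk u u} (hc : c.IsCycle) :
    c.IsHamiltonianCycle := by
  refine isHamiltonianCycle_of_ncard_neighborSet_eq_two
    (e.preconnected_iff.2 cycleGraph_preconnected) (fun v ↦ ?_) hc
  rw [← ncard_neighborSet_cycleGraph hn (e v)]
  exact Nat.card_congr (e.mapNeighborSet v)

theorem isCycleConvex_iff :
    IsCycleConvex G S ↔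
      ∀ ⦃w⦄ (c : G.Walk w w), c.IsCycle → (∀ v ∈ c.support, v ∈ S ∪ {w}) → w ∈ S := by
  refine ⟨fun hS w c hc hcS ↦ ?_, fun h w hw ⟨c, hc⟩ ↦ ?_⟩
  · by_contra hw
    refine hS w hw ⟨c.induce _ hcS, ?_⟩
    rw [← Walk.map_induce c hcS] at hc
    exact hc.of_map
  · let ι := (Embedding.induce (G := G) (S ∪ {w})).toHom
    refine hw (h (c.map ι) (hc.map Subtype.val_injective) fun v hv ↦ ?_)
    obtain ⟨u, -, rfl⟩ := List.mem_map.1 (c.support_map ι ▸ hv)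
    exact u.2

theorem subset_cycleHull : S ⊆ cycleHull G S :=
  Set.subset_sInter fun _ hT ↦ hT.1

theorem IsCycleConvex.cycleHull_eq (hS : IsCycleConvex G S) : cycleHull G S = S :=
  Set.Subset.antisymm (Set.sInter_subset_of_mem ⟨subset_rfl, hS⟩) subset_cycleHull

theorem mem_cycleHull_of_isCycle {w : V} {c : G.Walk w w} (hc : c.IsCycle)
    (hcS : ∀ v ∈ c.support, v ∈ S ∪ {w}) : w ∈ cycleHull G S := by
  rintro T ⟨hST, hT⟩
  exact isCycleConvex_iff.1 hT c hc fun v hv ↦ Set.union_subset_union_left _ hST (hcS v hv)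

theorem mem_cycleHull_compl_singleton_iff {p : V} :
    p ∈ cycleHull G {p}ᶜ ↔ ∃ c : G.Walk p p, c.IsCycle := by
  refine ⟨fun hp ↦ ?_, fun ⟨c, hc⟩ ↦ mem_cycleHull_of_isCycle hc fun v _ ↦ by grind⟩
  by_contra! hacyclic
  have hconv : IsCycleConvex G {p}ᶜ := by
    refine isCycleConvex_iff.2 fun w c hc _ hw ↦ ?_
    obtain rfl : w = p := hw
    exact hacyclic c hc
  exact hconv.cycleHull_eq.subset hp rfl

theorem eq_singleton_of_forall_notMem_cycleHull_diff {p : V} (hpS : p ∈ S)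
    (hp : ∀ a ∈ S, p ∉ cycleHull G (S \ {a})) : S = {p} := by
  refine Set.eq_singleton_iff_unique_mem.2 ⟨hpS, fun a ha ↦ ?_⟩
  by_contra hap
  exact hp a ha (subset_cycleHull ⟨hpS, Ne.symm hap⟩)

theorem CIndep.ncard_le [Fintype V] [Nontrivial V] (hS : CIndep G S) :
    S.ncard ≤ Fintype.card V - 1 := by
  obtain ⟨p, -, hp⟩ := hS
  by_cases hpS : p ∈ S
  · rw [eq_singleton_of_forall_notMem_cycleHull_diff hpS hp, Set.ncard_singleton]
    exact Nat.le_sub_one_of_lt Fintype.one_lt_card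
  · exact Nat.le_sub_one_of_lt (Nat.card_eq_fintype_card (α := V) ▸ Set.ncard_lt_card (by grind))

theorem ncard_eq_card_sub_one_iff [Fintype V] [Nonempty V] :
    S.ncard = Fintype.card V - 1 ↔ ∃ p, S = {p}ᶜ := by
  have hadd : S.ncard + Sᶜ.ncard = Fintype.card V := by
    rw [S.ncard_add_ncard_compl, Nat.card_eq_fintype_card]
  have hpos : 0 < Fintype.card V := Fintype.card_pos
  calc
    S.ncard = Fintype.card V - 1 ↔ Sᶜ.ncard = 1 := by lia
    _ ↔ ∃ p, S = {p}ᶜ := Set.ncard_eq_one.trans <| exists_congr fun _ ↦ compl_eq_comm.trans eq_comm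

theorem carNumber_eq_card_sub_one_iff [Fintype V] [Nontrivial V] :
    carNumber G = Fintype.card V - 1 ↔ ∃ p : V, CIndep G {p}ᶜ := by
  have hle : Fintype.card V - 1 ∈ upperBounds {n | ∃ S : Set V, CIndep G S ∧ S.ncard = n} := by
    rintro _ ⟨S, hS, rfl⟩
    exact hS.ncard_le
  constructor
  · intro hcar
    have hne : {n | ∃ S : Set V, CIndep G S ∧ S.ncard = n}.Nonempty := by
      by_contra hempty
      rw [carNumber, Set.not_nonempty_iff_eq_empty.1 hempty, csSup_empty, bot_eq_zero] at hcar
      have := Fintype.one_lt_card (α := V)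
      lia
    obtain ⟨S, hS, hncard⟩ := Nat.sSup_mem hne ⟨_, hle⟩
    obtain ⟨p, rfl⟩ := ncard_eq_card_sub_one_iff.1 (hncard.trans hcar)
    exact ⟨p, hS⟩
  · rintro ⟨p, hp⟩
    exact (csSup_le' hle).antisymm
      (le_csSup ⟨_, hle⟩ ⟨_, hp, ncard_eq_card_sub_one_iff.2 ⟨p, rfl⟩⟩)

theorem cIndep_compl_singleton_iff {p : V} (hV : ({p}ᶜ : Set V).Nontrivial) :
    CIndep G {p}ᶜ ↔
      p ∈ cycleHull G {p}ᶜ ∧ ∀ a ≠ p, p ∉ cycleHull G ({p}ᶜ \ {a}) := by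
  refine ⟨fun ⟨q, hq, hqa⟩ ↦ ?_, fun ⟨hp, hpa⟩ ↦ ⟨p, hp, hpa⟩⟩
  suffices hqp : q = p by
    subst hqp
    exact ⟨hq, hqa⟩
  by_contra hqp
  exact hV.ne_singleton (eq_singleton_of_forall_notMem_cycleHull_diff hqp hqa)

theorem isHamiltonianCycle_of_forall_notMem_cycleHull [DecidableEq V] {p : V}
    (hp : ∀ a ≠ p, p ∉ cycleHull G ({p}ᶜ \ {a})) {c : G.Walk p p} (hc : c.IsCycle) :
    c.IsHamiltonianCycle := by
  refine isHamiltonianCycle_of_mem_support hc fun a ↦ ?_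
  by_contra hac
  have hap : a ≠ p := fun h ↦ hac (h ▸ c.start_mem_support)
  exact hp a hap (mem_cycleHull_of_isCycle hc fun v hv ↦ by grind)

theorem isCycleConvex_of_forall_isHamiltonianCycle [DecidableEq V]
    (hall : ∀ ⦃u⦄ (c : G.Walk u u), c.IsCycle → c.IsHamiltonianCycle) (hS : Sᶜ.Nontrivial) :
    IsCycleConvex G S := by
  refine isCycleConvex_iff.2 fun w c hc hcS ↦ ?_
  obtain ⟨a, ha, haw⟩ := hS.exists_ne w
  exact absurd (hcS a ((hall c hc).mem_support a)) (by grind)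

end

theorem stmt_13_general {V : Type*} [Fintype V] (G : SimpleGraph V)
    (hn : 3 ≤ Fintype.card V) :
    carNumber G = Fintype.card V - 1 ↔
      Nonempty (G ≃g SimpleGraph.cycleGraph (Fintype.card V)) := by
  classical
  have : Nontrivial V := Fintype.one_lt_card_iff_nontrivial.1 (by lia)
  have hcompl (p : V) : ({p}ᶜ : Set V).Nontrivial := by
    rw [← Set.one_lt_ncard_iff_nontrivial, ncard_eq_card_sub_one_iff.2 ⟨p, rfl⟩]
    lia
  simp only [carNumber_eq_card_sub_one_iff, cIndep_compl_singleton_iff (hcompl _),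
    mem_cycleHull_compl_singleton_iff]
  constructor
  · rintro ⟨p, ⟨c, hc⟩, hp⟩
    have hall (d : G.Walk p p) (hd : d.IsCycle) : d.IsHamiltonianCycle :=
      isHamiltonianCycle_of_forall_notMem_cycleHull hp hd
    exact nonempty_iso_cycleGraph_of_isHamiltonianCycle (hall c hc)
      (ncard_neighborSet_eq_two_of_forall_isHamiltonianCycle hc hall)
  · rintro ⟨e⟩
    have hall ⦃u : V⦄ (c : G.Walk u u) (hc : c.IsCycle) : c.IsHamiltonianCycle :=
      isHamiltonianCycle_of_iso_cycleGraph hn e hc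
    obtain ⟨p, c, hc, -⟩ := (cycleGraph_isContained_iff hn).1 e.symm.isContained
    refine ⟨p, ⟨c, hc⟩, fun a hap ↦ ?_⟩
    have hconv : IsCycleConvex G ({p}ᶜ \ {a}) :=
      isCycleConvex_of_forall_isHamiltonianCycle hall ⟨p, by simp, a, by simp, hap.symm⟩
    simp [hconv.cycleHull_eq]

/-- A finite connected graph on n ≥ 3 vertices has Caratheodory number n - 1 iff
it is isomorphic to the cycle on n vertices. -/
theorem stmt_13 {V : Type*} [Fintype V] (G : SimpleGraph V) (hG : G.Connected)
    (hn : 3 ≤ Fintype.card V) :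
    carNumber G = Fintype.card V - 1 ↔
      Nonempty (G ≃g SimpleGraph.cycleGraph (Fintype.card V)) := by
  exact stmt_13_general G hn
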